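/- arXiv:1307.8281 — 2 statements merged into one kernel-verified Lean document; each statement's English description precedes it below -/
import Mathlib

section
/- Let A ⊆ ℝ and W ⊆ ℝ with frontier(A) ⊆ W, and let q ∈ ℝ satisfy q < w for every w ∈ W. Then q ∈ A if and only if A is not bounded below. -/
open Set

theorem disjoint_or_subset_of_disjoint_frontier {X : Type*} [TopologicalSpace X] {s t : Set X}
    (hs : IsPreconnected s) (hst : Disjoint s (frontier t)) : Disjoint s t ∨ s ⊆ t := by
  have hcover : s ⊆ interior t ∪ interior tᶜ := by
    rw [← compl_frontier_eq_union_interior]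
    exact hst.subset_compl_right
  have hdisj : Disjoint (interior t) (interior tᶜ) :=
    disjoint_compl_right.mono interior_subset interior_subset
  rcases hs.subset_or_subset isOpen_interior isOpen_interior hdisj hcover with hint | hext
  · exact Or.inr (hint.trans interior_subset)
  · exact Or.inl (subset_compl_iff_disjoint_right.mp (hext.trans interior_subset))

theorem bddBelow_of_disjoint_Iic {α : Type*} [LinearOrder α] {s : Set α} {a : α}
    (h : Disjoint (Iic a) s) : BddBelow s :=
  ⟨a, fun _ hx ↦ le_of_not_ge fun hxa ↦ disjoint_left.mp h hxa hx⟩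

theorem statement_13_general {α : Type*} [ConditionallyCompleteLinearOrder α] [TopologicalSpace α]
    [OrderTopology α] [DenselyOrdered α] [NoMinOrder α] {A : Set α} {q : α}
    (hA : frontier A ⊆ Ioi q) : q ∈ A ↔ ¬ BddBelow A := by
  have hray : Disjoint (Iic q) (frontier A) := (Iic_disjoint_Ioi le_rfl).mono_right hA
  rcases disjoint_or_subset_of_disjoint_frontier isPreconnected_Iic hray with hdisj | hsub
  · exact iff_of_false (disjoint_left.mp hdisj self_mem_Iic)
      (not_not_intro (bddBelow_of_disjoint_Iic hdisj))
  · exact iff_of_true (hsub self_mem_Iic) fun hbdd ↦ not_bddBelow_Iic q (hbdd.mono hsub)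

/-- If `frontier A ⊆ W` and `q` is strictly below every element of `W`, then
`q ∈ A` iff `A` is not bounded below. -/
theorem statement_13 (A W : Set ℝ) (hfr : frontier A ⊆ W) (q : ℝ)
    (hq : ∀ w ∈ W, q < w) :
    q ∈ A ↔ ¬ BddBelow A :=
  statement_13_general (hfr.trans hq)
end

section
/- Let f : ℝⁿ → ℝ be continuous, S ⊆ ℝⁿ closed, T ⊆ S, and let E ⊆ ℝ and B ⊆ ℝ be finite sets. Assume that for every t ∈ ℝ ∖ E, the fiber f⁻¹(t) ∩ S is empty if and only if f⁻¹(t) ∩ T is empty. Let ℓ ∈ ℝ with ℓ ∈ closure(f(S)) and ℓ ∉ f(S). Then there exists a sequence (x_k) of points of T such that f(x_k) ∉ B for all k, ‖x_k‖ → ∞, and f(x_k) → ℓ. -/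
open Filter Topology

/-!
A compact piece of the closed set `S` has a compact image, which misses a neighbourhood of the
unattained value `ℓ`. So *any* sequence in `S` along which `f` tends to `ℓ` leaves every compact
set, and it remains only to find one in `T` avoiding the values `B`. Since `ℓ` is adherent to
`f(S)` without belonging to it, it is an accumulation point of `f(S)`. The values in `E` and `B`
other than `ℓ` stay away from `ℓ`, so the values of `f` on `S` close enough to `ℓ` are also taken
on `T`, and lie outside `B`.
-/

section

variable {ι X Y : Type*}

theorem sep_eq_empty_iff_notMem_image {f : X → Y} {S : Set X} {t : Y} :
    {x ∈ S | f x = t} = ∅ ↔ t ∉ f '' S := by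
  simp only [Set.sep_eq_empty_iff_mem_false, Set.mem_image, not_exists, not_and]

theorem eventually_nhdsNE_notMem_of_finite [TopologicalSpace Y] [T1Space Y] {F : Set Y}
    (hF : F.Finite) (ℓ : Y) : ∀ᶠ t in 𝓝[≠] ℓ, t ∉ F :=
  nhdsNE_le_cofinite ℓ hF.compl_mem_cofinite

theorem exists_seq_mem_tendsto_of_frequently_mem_image {f : X → Y} {A : Set X} {l : Filter Y}
    [l.IsCountablyGenerated] (h : ∃ᶠ t in l, t ∈ f '' A) :
    ∃ x : ℕ → X, (∀ k, x k ∈ A) ∧ Tendsto (fun k => f (x k)) atTop l := by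
  obtain ⟨t, ht, htA⟩ := exists_seq_forall_of_frequently h
  choose x hxA hxt using htA
  exact ⟨x, hxA, by simpa only [hxt] using ht⟩

variable [TopologicalSpace X] [TopologicalSpace Y] [T2Space Y] {f : X → Y} {S T : Set X} {ℓ : Y}

theorem tendsto_cocompact_of_notMem_image {l : Filter ι} {u : ι → X} (hf : ContinuousOn f S)
    (hS : IsClosed S) (hℓ : ℓ ∉ f '' S) (huS : ∀ᶠ i in l, u i ∈ S)
    (hu : Tendsto (fun i => f (u i)) l (𝓝 ℓ)) : Tendsto u l (cocompact X) := by
  refine (hasBasis_cocompact.tendsto_right_iff).2 fun K hK => ?_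
  have hclosed : IsClosed (f '' (S ∩ K)) :=
    ((hK.inter_left hS).image_of_continuousOn (hf.mono Set.inter_subset_left)).isClosed
  have hmem : ℓ ∉ f '' (S ∩ K) := fun h => hℓ (Set.image_mono Set.inter_subset_left h)
  filter_upwards [huS, hu.eventually (hclosed.isOpen_compl.mem_nhds hmem)] with i hiS hi hiK
  exact hi ⟨u i, ⟨hiS, hiK⟩, rfl⟩

theorem statement_15_general [FirstCountableTopology Y] {B : Set Y} (hf : ContinuousOn f S)
    (hS : IsClosed S) (hTS : T ⊆ S) (hfib : ∀ᶠ t in 𝓝[≠] ℓ, t ∈ f '' S → t ∈ f '' T)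
    (hB : ∀ᶠ t in 𝓝[≠] ℓ, t ∉ B) (hcl : ℓ ∈ closure (f '' S)) (hna : ℓ ∉ f '' S) :
    ∃ x : ℕ → X, (∀ k, x k ∈ T) ∧ (∀ k, f (x k) ∉ B) ∧
      Tendsto x atTop (cocompact X) ∧ Tendsto (fun k => f (x k)) atTop (𝓝 ℓ) := by
  have hacc : AccPt ℓ (𝓟 (f '' S)) :=
    (clusterPt_principal.1 (mem_closure_iff_clusterPt.1 hcl)).resolve_left hna
  have hfreq : ∃ᶠ t in 𝓝[≠] ℓ, t ∈ f '' (T ∩ f ⁻¹' Bᶜ) := by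
    simp only [Set.image_inter_preimage]
    exact (accPt_iff_frequently_nhdsNE.1 hacc).mp
      ((hfib.and hB).mono fun t ht htS => ⟨ht.1 htS, ht.2⟩)
  obtain ⟨x, hx, hlim⟩ := exists_seq_mem_tendsto_of_frequently_mem_image hfreq
  have hlim' : Tendsto (fun k => f (x k)) atTop (𝓝 ℓ) := hlim.mono_right nhdsWithin_le_nhds
  have hescape : Tendsto x atTop (cocompact X) :=
    tendsto_cocompact_of_notMem_image hf hS hna (.of_forall fun k => hTS (hx k).1) hlim'
  exact ⟨x, fun k => (hx k).1, fun k => (hx k).2, hescape, hlim'⟩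

end

/-- If away from a finite set `E` the fibers of `f` over the closed set `S` and
over `T ⊆ S` are simultaneously empty or not, and `ℓ` is in the closure of `f(S)` but not
attained on `S`, then there is a sequence in `T` avoiding the finite set `B` of values, with
norms tending to infinity, along which `f` tends to `ℓ`. -/
theorem statement_15 (n : ℕ) (f : EuclideanSpace ℝ (Fin n) → ℝ) (hf : Continuous f)
    (S T : Set (EuclideanSpace ℝ (Fin n))) (hS : IsClosed S) (hTS : T ⊆ S)
    (E B : Set ℝ) (hE : E.Finite) (hB : B.Finite)
    (hfib : ∀ t : ℝ, t ∉ E → ({x ∈ S | f x = t} = ∅ ↔ {x ∈ T | f x = t} = ∅))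
    (ℓ : ℝ) (hcl : ℓ ∈ closure (f '' S)) (hna : ℓ ∉ f '' S) :
    ∃ x : ℕ → EuclideanSpace ℝ (Fin n), (∀ k, x k ∈ T) ∧ (∀ k, f (x k) ∉ B) ∧
      Tendsto (fun k => ‖x k‖) atTop atTop ∧
      Tendsto (fun k => f (x k)) atTop (𝓝 ℓ) := by
  have hfib' : ∀ᶠ t in 𝓝[≠] ℓ, t ∈ f '' S → t ∈ f '' T :=
    (eventually_nhdsNE_notMem_of_finite hE ℓ).mono fun t ht => by
      simpa only [sep_eq_empty_iff_notMem_image, not_imp_not] using (hfib t ht).2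
  obtain ⟨x, hxT, hxB, hx, hlim⟩ := statement_15_general hf.continuousOn hS hTS hfib'
    (eventually_nhdsNE_notMem_of_finite hB ℓ) hcl hna
  exact ⟨x, hxT, hxB, tendsto_norm_cocompact_atTop.comp hx, hlim⟩
end
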